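/- arXiv:1403.6252 — 2 statements merged into one kernel-verified Lean document; each statement's English description precedes it below -/
import Mathlib

section
/- For every R ≥ R₀ one has the energy identity d𝓔/dR(R) = −(2/R) ∫₀^{2π} [ (∂_R U)²(R,θ) + (e^{4U(R,θ)}/(4R²)) (∂_θ A)²(R,θ) ] dθ; in particular, the energy 𝓔 is non-increasing on [R₀,∞). -/
open Real MeasureTheory Set

/-- Partial derivative with respect to the first (time) variable `R`. -/
noncomputable def pdR (f : ℝ → ℝ → ℝ) (R θ : ℝ) : ℝ := deriv (fun r => f r θ) R

/-- Partial derivative with respect to the second (space) variable `θ`. -/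
noncomputable def pdT (f : ℝ → ℝ → ℝ) (R θ : ℝ) : ℝ := deriv (fun t => f R t) θ

theorem sm_hasDerivR (f : ℝ → ℝ → ℝ) (hf : ContDiff ℝ (⊤ : ℕ∞) (Function.uncurry f)) (R θ : ℝ) :
    HasDerivAt (fun r => f r θ) (fderiv ℝ (Function.uncurry f) (R, θ) (1, 0)) R := by
  have h1 : HasFDerivAt (Function.uncurry f) (fderiv ℝ (Function.uncurry f) (R, θ)) (R, θ) :=
    (hf.differentiable (by simp) (R, θ)).hasFDerivAt
  have h2 : HasDerivAt (fun r : ℝ => (r, θ)) ((1 : ℝ), (0 : ℝ)) R :=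
    (hasDerivAt_id R).prodMk (hasDerivAt_const R θ)
  exact HasFDerivAt.comp_hasDerivAt (f := fun r : ℝ => (r, θ)) R h1 h2

theorem sm_hasDerivT (f : ℝ → ℝ → ℝ) (hf : ContDiff ℝ (⊤ : ℕ∞) (Function.uncurry f)) (R θ : ℝ) :
    HasDerivAt (fun t => f R t) (fderiv ℝ (Function.uncurry f) (R, θ) (0, 1)) θ := by
  have h1 : HasFDerivAt (Function.uncurry f) (fderiv ℝ (Function.uncurry f) (R, θ)) (R, θ) :=
    (hf.differentiable (by simp) (R, θ)).hasFDerivAt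
  have h2 : HasDerivAt (fun t : ℝ => (R, t)) ((0 : ℝ), (1 : ℝ)) θ :=
    (hasDerivAt_const θ R).prodMk (hasDerivAt_id θ)
  exact HasFDerivAt.comp_hasDerivAt (f := fun t : ℝ => (R, t)) θ h1 h2

theorem pdR_eq (f : ℝ → ℝ → ℝ) (hf : ContDiff ℝ (⊤ : ℕ∞) (Function.uncurry f)) :
    Function.uncurry (pdR f) = fun p => fderiv ℝ (Function.uncurry f) p (1, 0) := by
  funext ⟨R, θ⟩
  exact (sm_hasDerivR f hf R θ).deriv

theorem pdT_eq (f : ℝ → ℝ → ℝ) (hf : ContDiff ℝ (⊤ : ℕ∞) (Function.uncurry f)) :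
    Function.uncurry (pdT f) = fun p => fderiv ℝ (Function.uncurry f) p (0, 1) := by
  funext ⟨R, θ⟩
  exact (sm_hasDerivT f hf R θ).deriv

theorem pdR_smooth (f : ℝ → ℝ → ℝ) (hf : ContDiff ℝ (⊤ : ℕ∞) (Function.uncurry f)) :
    ContDiff ℝ (⊤ : ℕ∞) (Function.uncurry (pdR f)) := by
  rw [pdR_eq f hf]
  exact (hf.fderiv_right (m := ((⊤ : ℕ∞) : WithTop ℕ∞)) (by simp)).clm_apply contDiff_const

theorem pdT_smooth (f : ℝ → ℝ → ℝ) (hf : ContDiff ℝ (⊤ : ℕ∞) (Function.uncurry f)) :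
    ContDiff ℝ (⊤ : ℕ∞) (Function.uncurry (pdT f)) := by
  rw [pdT_eq f hf]
  exact (hf.fderiv_right (m := ((⊤ : ℕ∞) : WithTop ℕ∞)) (by simp)).clm_apply contDiff_const

theorem pdR_hasDeriv (f : ℝ → ℝ → ℝ) (hf : ContDiff ℝ (⊤ : ℕ∞) (Function.uncurry f)) (R θ : ℝ) :
    HasDerivAt (fun r => f r θ) (pdR f R θ) R :=
  (sm_hasDerivR f hf R θ).differentiableAt.hasDerivAt

theorem pdT_hasDeriv (f : ℝ → ℝ → ℝ) (hf : ContDiff ℝ (⊤ : ℕ∞) (Function.uncurry f)) (R θ : ℝ) :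
    HasDerivAt (fun t => f R t) (pdT f R θ) θ :=
  (sm_hasDerivT f hf R θ).differentiableAt.hasDerivAt

theorem pd_comm (f : ℝ → ℝ → ℝ) (hf : ContDiff ℝ (⊤ : ℕ∞) (Function.uncurry f)) (R θ : ℝ) :
    pdR (pdT f) R θ = pdT (pdR f) R θ := by
  have hd : HasFDerivAt (fderiv ℝ (Function.uncurry f))
      (fderiv ℝ (fderiv ℝ (Function.uncurry f)) (R, θ)) (R, θ) :=
    ((hf.fderiv_right (m := ((⊤ : ℕ∞) : WithTop ℕ∞)) (by simp)).differentiable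
      (by simp) (R, θ)).hasFDerivAt
  have e1 : pdR (pdT f) R θ
      = fderiv ℝ (fderiv ℝ (Function.uncurry f)) (R, θ) (1, 0) (0, 1) := by
    have h := (sm_hasDerivR (pdT f) (pdT_smooth f hf) R θ).deriv
    rw [pdT_eq f hf, (hd.clm_apply (hasFDerivAt_const ((0 : ℝ), (1 : ℝ)) (R, θ))).fderiv] at h
    simpa [pdR] using h
  have e2 : pdT (pdR f) R θ
      = fderiv ℝ (fderiv ℝ (Function.uncurry f)) (R, θ) (0, 1) (1, 0) := by
    have h := (sm_hasDerivT (pdR f) (pdR_smooth f hf) R θ).deriv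
    rw [pdR_eq f hf, (hd.clm_apply (hasFDerivAt_const ((1 : ℝ), (0 : ℝ)) (R, θ))).fderiv] at h
    simpa [pdT] using h
  rw [e1, e2]
  exact second_derivative_symmetric
    (fun y => (hf.differentiable (by simp) y).hasFDerivAt) hd _ _

theorem pdR_per (f : ℝ → ℝ → ℝ) (h : ∀ R θ, f R (θ + 2 * π) = f R θ) (R θ : ℝ) :
    pdR f R (θ + 2 * π) = pdR f R θ := by
  simp only [pdR, h]

theorem pdT_per (f : ℝ → ℝ → ℝ) (h : ∀ R θ, f R (θ + 2 * π) = f R θ) (R θ : ℝ) :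
    pdT f R (θ + 2 * π) = pdT f R θ := by
  simp only [pdT]
  rw [← deriv_comp_add_const]
  simp only [h]

theorem sm_cont (f : ℝ → ℝ → ℝ) (hf : ContDiff ℝ (⊤ : ℕ∞) (Function.uncurry f)) (R : ℝ) :
    Continuous (fun t => f R t) :=
  hf.continuous.comp (by fun_prop : Continuous fun t : ℝ => (R, t))

theorem int_hasDeriv (f : ℝ → ℝ → ℝ) (hf : ContDiff ℝ (⊤ : ℕ∞) (Function.uncurry f)) (a b R : ℝ) :
    HasDerivAt (fun r => ∫ t in a..b, f r t) (∫ t in a..b, pdR f R t) R := by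
  have hc := (pdR_smooth f hf).continuous
  obtain ⟨C, hC⟩ := ((isCompact_Icc (a := R - 1) (b := R + 1)).prod
    (isCompact_uIcc (a := a) (b := b))).exists_bound_of_continuousOn hc.continuousOn
  refine (intervalIntegral.hasDerivAt_integral_of_dominated_loc_of_deriv_le
    (F := f) (F' := pdR f) (bound := fun _ => C) (s := Icc (R - 1) (R + 1))
    (Icc_mem_nhds (by linarith) (by linarith)) ?_ ?_ ?_ ?_ ?_ ?_).2
  · exact Filter.Eventually.of_forall fun x => (sm_cont f hf x).aestronglyMeasurable
  · exact (sm_cont f hf R).intervalIntegrable _ _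
  · exact (sm_cont _ (pdR_smooth f hf) R).aestronglyMeasurable
  · exact Filter.Eventually.of_forall fun t ht x hx => hC (x, t) ⟨hx, uIoc_subset_uIcc ht⟩
  · exact intervalIntegrable_const
  · exact Filter.Eventually.of_forall fun t ht x hx => pdR_hasDeriv f hf x t

theorem stmt0
    (R₀ : ℝ) (hR₀ : 0 < R₀)
    (U A : ℝ → ℝ → ℝ)
    (hU : ContDiff ℝ (⊤ : ℕ∞) (Function.uncurry U))
    (hA : ContDiff ℝ (⊤ : ℕ∞) (Function.uncurry A))
    (hUper : ∀ R θ, U R (θ + 2 * π) = U R θ)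
    (hAper : ∀ R θ, A R (θ + 2 * π) = A R θ)
    (eqU : ∀ R, R₀ ≤ R → ∀ θ : ℝ,
      deriv (fun r => r * pdR U r θ) R - deriv (fun t => R * pdT U R t) θ
        = exp (4 * U R θ) / (2 * R) * ((pdR A R θ) ^ 2 - (pdT A R θ) ^ 2))
    (eqA : ∀ R, R₀ ≤ R → ∀ θ : ℝ,
      deriv (fun r => r⁻¹ * pdR A r θ) R - deriv (fun t => R⁻¹ * pdT A R t) θ
        = 4 / R * (-(pdR U R θ * pdR A R θ) + pdT U R θ * pdT A R θ))
    (E : ℝ → ℝ)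
    (hE : ∀ R, E R = ∫ θ in (0:ℝ)..(2 * π),
      (pdR U R θ) ^ 2 + (pdT U R θ) ^ 2
        + exp (4 * U R θ) / (4 * R ^ 2) * ((pdR A R θ) ^ 2 + (pdT A R θ) ^ 2)) :
    (∀ R, R₀ ≤ R → HasDerivWithinAt E
        (-(2 / R) * ∫ θ in (0:ℝ)..(2 * π),
          (pdR U R θ) ^ 2 + exp (4 * U R θ) / (4 * R ^ 2) * (pdT A R θ) ^ 2)
        (Set.Ici R₀) R)
      ∧ AntitoneOn E (Set.Ici R₀) := by
  have key : ∀ R, R₀ ≤ R → HasDerivAt E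
        (-(2 / R) * ∫ θ in (0:ℝ)..(2 * π),
          (pdR U R θ) ^ 2 + exp (4 * U R θ) / (4 * R ^ 2) * (pdT A R θ) ^ 2) R := by
    intro R hR
    have hRpos : 0 < R := hR₀.trans_le hR
    have hR0 : R ≠ 0 := hRpos.ne'
    have hUR := pdR_smooth U hU
    have hUT := pdT_smooth U hU
    have hAR := pdR_smooth A hA
    have hAT := pdT_smooth A hA
    let f : ℝ → ℝ → ℝ := fun R θ => (pdR U R θ) ^ 2 + (pdT U R θ) ^ 2
    let g : ℝ → ℝ → ℝ := fun R θ =>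
      exp (4 * U R θ) * ((pdR A R θ) ^ 2 + (pdT A R θ) ^ 2)
    have hf : ContDiff ℝ (⊤ : ℕ∞) (Function.uncurry f) := (hUR.pow 2).add (hUT.pow 2)
    have hg : ContDiff ℝ (⊤ : ℕ∞) (Function.uncurry g) :=
      ((contDiff_const (c := (4 : ℝ))).mul hU).exp.mul ((hAR.pow 2).add (hAT.pow 2))
    have hEq : E = fun r => (∫ t in (0:ℝ)..(2 * π), f r t)
        + (4 * r ^ 2)⁻¹ * ∫ t in (0:ℝ)..(2 * π), g r t := by
      funext r
      rw [hE r, ← intervalIntegral.integral_const_mul, ← intervalIntegral.integral_add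
        ((sm_cont f hf r).intervalIntegrable _ _)
        (((sm_cont g hg r).const_mul _).intervalIntegrable _ _)]
      congr 1
      funext t
      simp only [f, g]
      ring
    have hq : HasDerivAt (fun r : ℝ => (4 * r ^ 2)⁻¹) (-(2 * R ^ 3)⁻¹) R := by
      have h4 : HasDerivAt (fun r : ℝ => 4 * r ^ 2) (4 * (2 * R)) R := by
        simpa using (hasDerivAt_pow 2 R).const_mul (4 : ℝ)
      refine HasDerivAt.congr_deriv (h4.inv (by positivity)) ?_
      field_simp
      norm_num
    have hD := (int_hasDeriv f hf 0 (2 * π) R).add (hq.mul (int_hasDeriv g hg 0 (2 * π) R))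
    rw [hEq]
    refine HasDerivAt.congr_deriv hD ?_
    -- flux term
    let W : ℝ → ℝ := fun θ => 2 * (pdR U R θ * pdT U R θ)
      + (2 * R ^ 2)⁻¹ * (exp (4 * U R θ) * (pdR A R θ * pdT A R θ))
    let W' : ℝ → ℝ := fun θ => 2 * (pdT (pdR U) R θ * pdT U R θ + pdR U R θ * pdT (pdT U) R θ)
      + (2 * R ^ 2)⁻¹ * (exp (4 * U R θ) * (4 * pdT U R θ) * (pdR A R θ * pdT A R θ)
        + exp (4 * U R θ) * (pdT (pdR A) R θ * pdT A R θ + pdR A R θ * pdT (pdT A) R θ))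
    have hW : ∀ θ, HasDerivAt W (W' θ) θ := fun θ =>
      (((pdT_hasDeriv _ hUR R θ).mul (pdT_hasDeriv _ hUT R θ)).const_mul 2).add
        (((((pdT_hasDeriv _ hU R θ).const_mul 4).exp).mul
          ((pdT_hasDeriv _ hAR R θ).mul (pdT_hasDeriv _ hAT R θ))).const_mul _)
    have cU := sm_cont _ hU R
    have cUR := sm_cont _ hUR R
    have cUT := sm_cont _ hUT R
    have cAR := sm_cont _ hAR R
    have cAT := sm_cont _ hAT R
    have cURT := sm_cont _ (pdT_smooth _ hUR) R
    have cUTT := sm_cont _ (pdT_smooth _ hUT) R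
    have cART := sm_cont _ (pdT_smooth _ hAR) R
    have cATT := sm_cont _ (pdT_smooth _ hAT) R
    have cW' : Continuous W' := by
      simp only [W']
      fun_prop
    have hW0 : ∫ θ in (0:ℝ)..(2 * π), W' θ = 0 := by
      rw [intervalIntegral.integral_eq_sub_of_hasDerivAt (fun θ _ => hW θ)
        (cW'.intervalIntegrable _ _)]
      have h1 := pdR_per U hUper R 0
      have h2 := pdT_per U hUper R 0
      have h3 := pdR_per A hAper R 0
      have h4 := pdT_per A hAper R 0
      have h5 := hUper R 0
      rw [zero_add] at h1 h2 h3 h4 h5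
      simp only [W, h1, h2, h3, h4, h5, sub_self]
    have cf' := sm_cont _ (pdR_smooth f hf) R
    have cg' := sm_cont _ (pdR_smooth g hg) R
    have cg := sm_cont _ hg R
    have cB : Continuous fun θ =>
        (pdR U R θ) ^ 2 + exp (4 * U R θ) / (4 * R ^ 2) * (pdT A R θ) ^ 2 := by
      simp only [div_eq_mul_inv]
      fun_prop
    have c2 : Continuous fun t => -(2 * R ^ 3)⁻¹ * g R t + (4 * R ^ 2)⁻¹ * pdR g R t :=
      (cg.const_mul _).add (cg'.const_mul _)
    refine Eq.trans ?_ (add_zero _)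
    refine Eq.trans ?_ (congrArg (fun z => _ + z) hW0)
    beta_reduce
    rw [← intervalIntegral.integral_const_mul,
      ← intervalIntegral.integral_const_mul, ← intervalIntegral.integral_const_mul,
      ← intervalIntegral.integral_add ((cg.const_mul _).intervalIntegrable _ _)
        ((cg'.const_mul _).intervalIntegrable _ _),
      ← intervalIntegral.integral_add (cf'.intervalIntegrable _ _)
        (c2.intervalIntegrable _ _),
      ← intervalIntegral.integral_add ((cB.const_mul _).intervalIntegrable _ _)
        (cW'.intervalIntegrable _ _)]
    congr 1
    funext θ
    have ef : pdR f R θ = 2 * pdR U R θ * pdR (pdR U) R θ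
        + 2 * pdT U R θ * pdT (pdR U) R θ := by
      have := (((pdR_hasDeriv _ hUR R θ).pow 2).add ((pdR_hasDeriv _ hUT R θ).pow 2)).deriv
      rw [pd_comm U hU] at this
      refine Eq.trans this ?_
      norm_num
    have eg : pdR g R θ = exp (4 * U R θ) * (4 * pdR U R θ)
          * ((pdR A R θ) ^ 2 + (pdT A R θ) ^ 2)
        + exp (4 * U R θ) * (2 * pdR A R θ * pdR (pdR A) R θ
        + 2 * pdT A R θ * pdT (pdR A) R θ) := by
      have := ((((pdR_hasDeriv _ hU R θ).const_mul 4).exp).mul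
        (((pdR_hasDeriv _ hAR R θ).pow 2).add ((pdR_hasDeriv _ hAT R θ).pow 2))).deriv
      rw [pd_comm A hA] at this
      refine Eq.trans this ?_
      norm_num
    have e1 := eqU R hR θ
    have e2 := eqA R hR θ
    have d1 : deriv (fun r => r * pdR U r θ) R = 1 * pdR U R θ + R * pdR (pdR U) R θ :=
      ((hasDerivAt_id R).mul (pdR_hasDeriv _ hUR R θ)).deriv
    have d2 : deriv (fun t => R * pdT U R t) θ = R * pdT (pdT U) R θ :=
      ((pdT_hasDeriv _ hUT R θ).const_mul R).deriv
    have d3 : deriv (fun r => r⁻¹ * pdR A r θ) R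
        = -(R ^ 2)⁻¹ * pdR A R θ + R⁻¹ * pdR (pdR A) R θ :=
      ((hasDerivAt_inv hR0).mul (pdR_hasDeriv _ hAR R θ)).deriv
    have d4 : deriv (fun t => R⁻¹ * pdT A R t) θ = R⁻¹ * pdT (pdT A) R θ :=
      ((pdT_hasDeriv _ hAT R θ).const_mul R⁻¹).deriv
    rw [d1, d2] at e1
    rw [d3, d4] at e2
    have s1 : pdR (pdR U) R θ = pdT (pdT U) R θ - pdR U R θ / R
        + exp (4 * U R θ) / (2 * R ^ 2) * ((pdR A R θ) ^ 2 - (pdT A R θ) ^ 2) := by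
      have : pdR (pdR U) R θ = (exp (4 * U R θ) / (2 * R) * ((pdR A R θ) ^ 2 - (pdT A R θ) ^ 2)
        + R * pdT (pdT U) R θ - 1 * pdR U R θ) / R := by
        rw [← e1]; field_simp; ring
      rw [this]; field_simp; ring
    have s2 : pdR (pdR A) R θ = pdT (pdT A) R θ + pdR A R θ / R
        + 4 * (-(pdR U R θ * pdR A R θ) + pdT U R θ * pdT A R θ) := by
      have : pdR (pdR A) R θ = (4 / R * (-(pdR U R θ * pdR A R θ) + pdT U R θ * pdT A R θ)
        + R⁻¹ * pdT (pdT A) R θ + (R ^ 2)⁻¹ * pdR A R θ) * R := by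
        rw [← e2]; field_simp; ring
      rw [this]; field_simp; ring
    rw [ef, eg, s1, s2]
    simp only [g, W']
    field_simp
    ring
  refine ⟨fun R hR => (key R hR).hasDerivWithinAt, ?_⟩
  refine antitoneOn_of_deriv_nonpos (convex_Ici R₀)
    (fun R hR => (key R hR).continuousAt.continuousWithinAt)
    (fun R hR => (key R (interior_subset hR)).differentiableAt.differentiableWithinAt) ?_
  intro R hR
  have hR' : R₀ ≤ R := interior_subset hR
  rw [(key R hR').deriv]
  have hRpos : 0 < R := hR₀.trans_le hR'
  have hI : 0 ≤ ∫ θ in (0:ℝ)..(2 * π),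
          (pdR U R θ) ^ 2 + exp (4 * U R θ) / (4 * R ^ 2) * (pdT A R θ) ^ 2 :=
    intervalIntegral.integral_nonneg (by positivity) (fun θ _ => by positivity)
  have : 0 ≤ 2 / R := by positivity
  nlinarith [mul_nonneg this hI]
end

section
/- For every R ≥ R₀ one has 𝓔(R) ≤ 𝓔(R₀); moreover the spacetime estimate ∫_{R₀}^{∞} ∫₀^{2π} [ (2/R) (∂_R U)²(R,θ) + (e^{4U(R,θ)}/(2R³)) (∂_θ A)²(R,θ) ] dθ dR ≤ 𝓔(R₀) holds. -/
open Real MeasureTheory Set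

lemma hasDerivAt_pdR {f : ℝ → ℝ → ℝ} (hf : ContDiff ℝ (⊤ : ℕ∞) (Function.uncurry f)) (R θ : ℝ) :
    HasDerivAt (fun r => f r θ) (pdR f R θ) R ∧
      pdR f R θ = fderiv ℝ (Function.uncurry f) (R, θ) (1, 0) := by
  have h1 : HasFDerivAt (Function.uncurry f) (fderiv ℝ (Function.uncurry f) (R, θ)) (R, θ) :=
    (hf.differentiable (by simp) _).hasFDerivAt
  have h2 : HasDerivAt (fun r : ℝ => (r, θ)) (1, 0) R :=
    (hasDerivAt_id R).prodMk (hasDerivAt_const R θ)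
  have h3 : HasDerivAt (fun r => f r θ) (fderiv ℝ (Function.uncurry f) (R, θ) (1, 0)) R :=
    HasFDerivAt.comp_hasDerivAt R (f := fun r : ℝ => (r, θ)) h1 h2
  have h4 : pdR f R θ = _ := h3.deriv
  exact ⟨h4 ▸ h3, h4⟩

lemma hasDerivAt_pdT {f : ℝ → ℝ → ℝ} (hf : ContDiff ℝ (⊤ : ℕ∞) (Function.uncurry f)) (R θ : ℝ) :
    HasDerivAt (fun t => f R t) (pdT f R θ) θ ∧
      pdT f R θ = fderiv ℝ (Function.uncurry f) (R, θ) (0, 1) := by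
  have h1 : HasFDerivAt (Function.uncurry f) (fderiv ℝ (Function.uncurry f) (R, θ)) (R, θ) :=
    (hf.differentiable (by simp) _).hasFDerivAt
  have h2 : HasDerivAt (fun t : ℝ => (R, t)) (0, 1) θ :=
    (hasDerivAt_const θ R).prodMk (hasDerivAt_id θ)
  have h3 : HasDerivAt (fun t => f R t) (fderiv ℝ (Function.uncurry f) (R, θ) (0, 1)) θ :=
    HasFDerivAt.comp_hasDerivAt θ (f := fun t : ℝ => (R, t)) h1 h2
  have h4 : pdT f R θ = _ := h3.deriv
  exact ⟨h4 ▸ h3, h4⟩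

lemma uncurry_pdR {f : ℝ → ℝ → ℝ} (hf : ContDiff ℝ (⊤ : ℕ∞) (Function.uncurry f)) :
    Function.uncurry (pdR f) = fun p => fderiv ℝ (Function.uncurry f) p (1, 0) := by
  ext ⟨R, θ⟩
  exact (hasDerivAt_pdR hf R θ).2

lemma uncurry_pdT {f : ℝ → ℝ → ℝ} (hf : ContDiff ℝ (⊤ : ℕ∞) (Function.uncurry f)) :
    Function.uncurry (pdT f) = fun p => fderiv ℝ (Function.uncurry f) p (0, 1) := by
  ext ⟨R, θ⟩
  exact (hasDerivAt_pdT hf R θ).2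

lemma contDiff_pdR {f : ℝ → ℝ → ℝ} (hf : ContDiff ℝ (⊤ : ℕ∞) (Function.uncurry f)) :
    ContDiff ℝ (⊤ : ℕ∞) (Function.uncurry (pdR f)) := by
  rw [uncurry_pdR hf]
  exact (hf.fderiv_right (by simp)).clm_apply contDiff_const

lemma contDiff_pdT {f : ℝ → ℝ → ℝ} (hf : ContDiff ℝ (⊤ : ℕ∞) (Function.uncurry f)) :
    ContDiff ℝ (⊤ : ℕ∞) (Function.uncurry (pdT f)) := by
  rw [uncurry_pdT hf]
  exact (hf.fderiv_right (by simp)).clm_apply contDiff_const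

lemma pdR_pdT {f : ℝ → ℝ → ℝ} (hf : ContDiff ℝ (⊤ : ℕ∞) (Function.uncurry f)) (R θ : ℝ) :
    pdR (pdT f) R θ = pdT (pdR f) R θ := by
  rw [(hasDerivAt_pdR (contDiff_pdT hf) R θ).2, (hasDerivAt_pdT (contDiff_pdR hf) R θ).2,
    uncurry_pdR hf, uncurry_pdT hf]
  have hd : DifferentiableAt ℝ (fderiv ℝ (Function.uncurry f)) (R, θ) :=
    (hf.fderiv_right (m := (⊤ : ℕ∞)) (by simp)).differentiable (by simp) _
  have hs : IsSymmSndFDerivAt ℝ (Function.uncurry f) (R, θ) :=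
    hf.contDiffAt.isSymmSndFDerivAt (by
      rw [minSmoothness_of_isRCLikeNormedField]
      exact WithTop.coe_le_coe.2 (le_top : (2 : ℕ∞) ≤ ⊤))
  rw [fderiv_clm_apply hd (differentiableAt_const _), fderiv_clm_apply hd (differentiableAt_const _)]
  simpa using hs.eq (1, 0) (0, 1)

lemma pdR_periodic {f : ℝ → ℝ → ℝ} {c : ℝ} (h : ∀ R θ, f R (θ + c) = f R θ) (R θ : ℝ) :
    pdR f R (θ + c) = pdR f R θ := by
  simp only [pdR, h]

lemma pdT_periodic {f : ℝ → ℝ → ℝ} {c : ℝ} (h : ∀ R θ, f R (θ + c) = f R θ) (R θ : ℝ) :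
    pdT f R (θ + c) = pdT f R θ := by
  unfold pdT
  rw [← deriv_comp_add_const]
  simp only [h]

lemma integrable_box {g : ℝ → ℝ → ℝ} {R₀ R c : ℝ} (hR : R₀ ≤ R)
    (hg : ContinuousOn (Function.uncurry g) (Ici R₀ ×ˢ univ)) :
    Integrable (Function.uncurry g)
      ((volume.restrict (uIoc R₀ R)).prod (volume.restrict (uIoc 0 c))) := by
  rw [Measure.prod_restrict, ← Measure.volume_eq_prod]
  have hc : IsCompact (Icc R₀ R ×ˢ uIcc 0 c) := isCompact_Icc.prod isCompact_uIcc
  have : IntegrableOn (Function.uncurry g) (Icc R₀ R ×ˢ uIcc 0 c) volume :=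
    (hg.mono (prod_mono Icc_subset_Ici_self (subset_univ _))).integrableOn_compact hc
  refine this.mono_set (prod_mono ?_ uIoc_subset_uIcc)
  rw [uIoc_of_le hR]
  exact Ioc_subset_Icc_self

lemma energy_abstract {R₀ c : ℝ} (hc : 0 ≤ c) (e F FT d : ℝ → ℝ → ℝ)
    (he : ∀ R, R₀ ≤ R → ∀ θ, HasDerivAt (fun r => e r θ) (FT R θ - d R θ) R)
    (hF : ∀ R, R₀ ≤ R → ∀ θ, HasDerivAt (fun t => F R t) (FT R θ) θ)
    (hFper : ∀ R θ, F R (θ + c) = F R θ)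
    (hec : ContinuousOn (Function.uncurry e) (Ici R₀ ×ˢ univ))
    (hFTc : ContinuousOn (Function.uncurry FT) (Ici R₀ ×ˢ univ))
    (hdc : ContinuousOn (Function.uncurry d) (Ici R₀ ×ˢ univ))
    (e_nonneg : ∀ R, R₀ ≤ R → ∀ θ, 0 ≤ e R θ)
    (d_nonneg : ∀ R, R₀ ≤ R → ∀ θ, 0 ≤ d R θ) :
    (∀ R, R₀ ≤ R → ∫ θ in (0:ℝ)..c, e R θ ≤ ∫ θ in (0:ℝ)..c, e R₀ θ) ∧
      ∫⁻ R in Set.Ioi R₀, ENNReal.ofReal (∫ θ in (0:ℝ)..c, d R θ)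
        ≤ ENNReal.ofReal (∫ θ in (0:ℝ)..c, e R₀ θ) := by
  have slice : ∀ (g : ℝ → ℝ → ℝ), ContinuousOn (Function.uncurry g) (Ici R₀ ×ˢ univ) →
      ∀ R, R₀ ≤ R → Continuous (g R) := by
    intro g hg R hR
    have : ContinuousOn (fun t : ℝ => Function.uncurry g (R, t)) univ :=
      hg.comp (by fun_prop) (fun t _ => ⟨hR, mem_univ _⟩)
    exact continuousOn_univ.1 this
  have slice' : ∀ (g : ℝ → ℝ → ℝ), ContinuousOn (Function.uncurry g) (Ici R₀ ×ˢ univ) →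
      ∀ θ, ContinuousOn (fun r => g r θ) (Ici R₀) := by
    intro g hg θ
    exact hg.comp (f := fun r : ℝ => (r, θ)) (by fun_prop) (fun t ht => ⟨ht, mem_univ _⟩)
  have hgc : ContinuousOn (Function.uncurry fun R θ => FT R θ - d R θ) (Ici R₀ ×ˢ univ) :=
    hFTc.sub hdc
  have D_nonneg : ∀ R, R₀ ≤ R → 0 ≤ ∫ θ in (0:ℝ)..c, d R θ := fun R hR =>
    intervalIntegral.integral_nonneg hc (fun θ _ => d_nonneg R hR θ)
  have key : ∀ R, R₀ ≤ R → ∫ r in R₀..R, (∫ θ in (0:ℝ)..c, d r θ) =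
      (∫ θ in (0:ℝ)..c, e R₀ θ) - ∫ θ in (0:ℝ)..c, e R θ := by
    intro R hR
    have h1 : ∀ θ, ∫ r in R₀..R, (FT r θ - d r θ) = e R θ - e R₀ θ := by
      intro θ
      apply intervalIntegral.integral_eq_sub_of_hasDerivAt
      · intro r hr
        rw [uIcc_of_le hR] at hr
        exact he r hr.1 θ
      · apply ContinuousOn.intervalIntegrable
        rw [uIcc_of_le hR]
        exact (slice' _ hgc θ).mono Icc_subset_Ici_self
    have h2 : ∀ r, R₀ ≤ r → ∫ θ in (0:ℝ)..c, (FT r θ - d r θ) = - ∫ θ in (0:ℝ)..c, d r θ := by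
      intro r hr
      have i1 : IntervalIntegrable (FT r) volume 0 c := (slice _ hFTc r hr).intervalIntegrable _ _
      have i2 : IntervalIntegrable (d r) volume 0 c := (slice _ hdc r hr).intervalIntegrable _ _
      rw [intervalIntegral.integral_sub i1 i2,
        intervalIntegral.integral_eq_sub_of_hasDerivAt (fun t _ => hF r hr t) i1]
      have := hFper r 0
      rw [zero_add] at this
      rw [this]; ring
    have h3 := intervalIntegral_intervalIntegral_swap (F := fun r θ => FT r θ - d r θ)
      (a := R₀) (b := R) (c := 0) (d := c) (by
        have := integrable_box (c := c) hR hgc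
        rwa [Measure.prod_restrict, ← Measure.volume_eq_prod] at this)
    simp only [h1] at h3
    rw [intervalIntegral.integral_sub ((slice _ hec R hR).intervalIntegrable _ _)
      ((slice _ hec R₀ le_rfl).intervalIntegrable _ _)] at h3
    rw [intervalIntegral.integral_congr (g := fun r => - ∫ θ in (0:ℝ)..c, d r θ)] at h3
    · rw [intervalIntegral.integral_neg] at h3
      linarith
    · intro r hr
      rw [uIcc_of_le hR] at hr
      exact h2 r hr.1
  constructor
  · intro R hR
    have h := key R hR
    have : 0 ≤ ∫ r in R₀..R, (∫ θ in (0:ℝ)..c, d r θ) :=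
      intervalIntegral.integral_nonneg hR (fun r hr => D_nonneg r hr.1)
    linarith
  · have hU : Ioi R₀ = ⋃ n : ℕ, Ioc R₀ (R₀ + n) := by
      ext x
      simp only [mem_Ioi, mem_iUnion, mem_Ioc]
      constructor
      · intro hx
        obtain ⟨n, hn⟩ := exists_nat_ge (x - R₀)
        exact ⟨n, hx, by linarith⟩
      · rintro ⟨n, hx, _⟩
        exact hx
    rw [hU, setLIntegral_iUnion_of_directed]
    · refine iSup_le fun n => ?_
      have hR : R₀ ≤ R₀ + n := by simp
      have hDint : Integrable (fun r => ∫ θ in (0:ℝ)..c, d r θ)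
          (volume.restrict (Ioc R₀ (R₀ + n))) := by
        have := (integrable_box (c := c) hR hdc).integral_prod_left
        simpa only [uIoc_of_le hR, uIoc_of_le hc, intervalIntegral.integral_of_le hc,
          Function.uncurry] using this
      rw [← ofReal_integral_eq_lintegral_ofReal hDint]
      · apply ENNReal.ofReal_le_ofReal
        rw [← intervalIntegral.integral_of_le hR, key _ hR]
        have : 0 ≤ ∫ θ in (0:ℝ)..c, e (R₀ + n) θ :=
          intervalIntegral.integral_nonneg hc (fun θ _ => e_nonneg _ hR θ)
        linarith
      · filter_upwards [ae_restrict_mem measurableSet_Ioc] with r hr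
        exact D_nonneg r hr.1.le
    · apply Monotone.directed_le
      intro m n hmn
      apply Ioc_subset_Ioc_right
      have : (m : ℝ) ≤ n := by exact_mod_cast hmn
      simpa using this

theorem stmt1
    (R₀ : ℝ) (hR₀ : 0 < R₀)
    (U A : ℝ → ℝ → ℝ)
    (hU : ContDiff ℝ (⊤ : ℕ∞) (Function.uncurry U))
    (hA : ContDiff ℝ (⊤ : ℕ∞) (Function.uncurry A))
    (hUper : ∀ R θ, U R (θ + 2 * π) = U R θ)
    (hAper : ∀ R θ, A R (θ + 2 * π) = A R θ)
    (eqU : ∀ R, R₀ ≤ R → ∀ θ : ℝ,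
      deriv (fun r => r * pdR U r θ) R - deriv (fun t => R * pdT U R t) θ
        = exp (4 * U R θ) / (2 * R) * ((pdR A R θ) ^ 2 - (pdT A R θ) ^ 2))
    (eqA : ∀ R, R₀ ≤ R → ∀ θ : ℝ,
      deriv (fun r => r⁻¹ * pdR A r θ) R - deriv (fun t => R⁻¹ * pdT A R t) θ
        = 4 / R * (-(pdR U R θ * pdR A R θ) + pdT U R θ * pdT A R θ))
    (E : ℝ → ℝ)
    (hE : ∀ R, E R = ∫ θ in (0:ℝ)..(2 * π),
      (pdR U R θ) ^ 2 + (pdT U R θ) ^ 2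
        + exp (4 * U R θ) / (4 * R ^ 2) * ((pdR A R θ) ^ 2 + (pdT A R θ) ^ 2))
 :
    (∀ R, R₀ ≤ R → E R ≤ E R₀)
      ∧ ∫⁻ R in Set.Ioi R₀, ENNReal.ofReal (∫ θ in (0:ℝ)..(2 * π),
          2 / R * (pdR U R θ) ^ 2 + exp (4 * U R θ) / (2 * R ^ 3) * (pdT A R θ) ^ 2)
        ≤ ENNReal.ofReal (E R₀) := by
  have hEe : E = fun R => ∫ θ in (0:ℝ)..(2 * π),
      (pdR U R θ) ^ 2 + (pdT U R θ) ^ 2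
        + exp (4 * U R θ) / (4 * R ^ 2) * ((pdR A R θ) ^ 2 + (pdT A R θ) ^ 2) := funext hE
  subst hEe
  have hUR := contDiff_pdR hU
  have hUT := contDiff_pdT hU
  have hAR := contDiff_pdR hA
  have hAT := contDiff_pdT hA
  have cU : Continuous fun p : ℝ × ℝ => U p.1 p.2 := hU.continuous
  have cUR : Continuous fun p : ℝ × ℝ => pdR U p.1 p.2 := hUR.continuous
  have cUT : Continuous fun p : ℝ × ℝ => pdT U p.1 p.2 := hUT.continuous
  have cAR : Continuous fun p : ℝ × ℝ => pdR A p.1 p.2 := hAR.continuous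
  have cAT : Continuous fun p : ℝ × ℝ => pdT A p.1 p.2 := hAT.continuous
  have cURT : Continuous fun p : ℝ × ℝ => pdT (pdR U) p.1 p.2 := (contDiff_pdT hUR).continuous
  have cUTT : Continuous fun p : ℝ × ℝ => pdT (pdT U) p.1 p.2 := (contDiff_pdT hUT).continuous
  have cART : Continuous fun p : ℝ × ℝ => pdT (pdR A) p.1 p.2 := (contDiff_pdT hAR).continuous
  have cATT : Continuous fun p : ℝ × ℝ => pdT (pdT A) p.1 p.2 := (contDiff_pdT hAT).continuous
  have hne : ∀ p : ℝ × ℝ, p ∈ Ici R₀ ×ˢ (univ : Set ℝ) → p.1 ≠ 0 := fun p hp =>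
    (hR₀.trans_le hp.1).ne'
  refine energy_abstract (c := 2 * π) (by positivity)
    (fun R θ => (pdR U R θ) ^ 2 + (pdT U R θ) ^ 2
        + exp (4 * U R θ) / (4 * R ^ 2) * ((pdR A R θ) ^ 2 + (pdT A R θ) ^ 2))
    (fun R θ => 2 * (pdR U R θ * pdT U R θ)
        + exp (4 * U R θ) * (pdR A R θ * pdT A R θ) / (2 * R ^ 2))
    (fun R θ => 2 * (pdT (pdR U) R θ * pdT U R θ + pdR U R θ * pdT (pdT U) R θ)
        + (exp (4 * U R θ) * (4 * pdT U R θ) * (pdR A R θ * pdT A R θ)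
          + exp (4 * U R θ) * (pdT (pdR A) R θ * pdT A R θ + pdR A R θ * pdT (pdT A) R θ))
            / (2 * R ^ 2))
    (fun R θ => 2 / R * (pdR U R θ) ^ 2 + exp (4 * U R θ) / (2 * R ^ 3) * (pdT A R θ) ^ 2)
    ?_ ?_ ?_ ?_ ?_ ?_ ?_ ?_
  · intro R hR θ
    have hR0 : R ≠ 0 := (hR₀.trans_le hR).ne'
    have dU := (hasDerivAt_pdR hU R θ).1
    have dUR := (hasDerivAt_pdR hUR R θ).1
    have dUT := (hasDerivAt_pdR hUT R θ).1
    have dAR := (hasDerivAt_pdR hAR R θ).1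
    have dAT := (hasDerivAt_pdR hAT R θ).1
    have tUT := (hasDerivAt_pdT hUT R θ).1
    have tAT := (hasDerivAt_pdT hAT R θ).1
    have e1 := eqU R hR θ
    have e2 := eqA R hR θ
    rw [((hasDerivAt_id' R).fun_mul dUR).deriv, (tUT.const_mul R).deriv] at e1
    rw [((hasDerivAt_inv hR0).fun_mul dAR).deriv, (tAT.const_mul R⁻¹).deriv] at e2
    rw [pdR_pdT hU] at dUT
    rw [pdR_pdT hA] at dAT
    have e1' : pdR (pdR U) R θ = pdT (pdT U) R θ - pdR U R θ / R
        + exp (4 * U R θ) / (2 * R ^ 2) * ((pdR A R θ) ^ 2 - (pdT A R θ) ^ 2) := by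
      field_simp at e1 ⊢
      linarith
    have e2' : pdR (pdR A) R θ = pdT (pdT A) R θ + pdR A R θ / R
        + 4 * (-(pdR U R θ * pdR A R θ) + pdT U R θ * pdT A R θ) := by
      field_simp at e2 ⊢
      linarith
    have h4 : HasDerivAt (fun r : ℝ => 4 * r ^ 2) (4 * (2 * R)) R := by
      simpa using ((hasDerivAt_pow 2 R).const_mul 4)
    have hfin := ((dUR.fun_pow 2).fun_add (dUT.fun_pow 2)).fun_add
      (((dU.const_mul 4).exp.fun_div h4 (by positivity)).fun_mul
        ((dAR.fun_pow 2).fun_add (dAT.fun_pow 2)))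
    refine hfin.congr_deriv ?_
    rw [e1', e2']
    simp only [Nat.cast_ofNat, Nat.add_one_sub_one, pow_one]
    field_simp
    ring
  · intro R hR θ
    have tU := (hasDerivAt_pdT hU R θ).1
    have tUR := (hasDerivAt_pdT hUR R θ).1
    have tUT := (hasDerivAt_pdT hUT R θ).1
    have tAR := (hasDerivAt_pdT hAR R θ).1
    have tAT := (hasDerivAt_pdT hAT R θ).1
    exact ((tUR.fun_mul tUT).const_mul 2).fun_add
      (((tU.const_mul 4).exp.fun_mul (tAR.fun_mul tAT)).div_const (2 * R ^ 2))
  · intro R θ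
    simp only [hUper, pdR_periodic hUper, pdT_periodic hUper, pdR_periodic hAper,
      pdT_periodic hAper]
  · simp only [Function.uncurry_def]
    have : ∀ p ∈ Ici R₀ ×ˢ (univ : Set ℝ), 4 * p.1 ^ 2 ≠ 0 := fun p hp => by
      have := hne p hp
      positivity
    fun_prop (disch := assumption)
  · simp only [Function.uncurry_def]
    have : ∀ p ∈ Ici R₀ ×ˢ (univ : Set ℝ), 2 * p.1 ^ 2 ≠ 0 := fun p hp => by
      have := hne p hp
      positivity
    fun_prop (disch := assumption)
  · simp only [Function.uncurry_def]
    have : ∀ p ∈ Ici R₀ ×ˢ (univ : Set ℝ), 2 * p.1 ^ 3 ≠ 0 := fun p hp => by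
      have := hne p hp
      positivity
    fun_prop (disch := assumption)
  · intro R hR θ
    positivity
  · intro R hR θ
    have := hR₀.trans_le hR
    positivity
end
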